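/- arXiv:2104.07729 — 2 statements merged into one kernel-verified Lean document; each statement's English description precedes it below -/
import Mathlib

section
/- Let k ≥ 2 be an integer. For all sufficiently large n, if G is an n-vertex W_{2k+1}-free simple graph attaining the maximum spectral radius among all n-vertex W_{2k+1}-free graphs, then λ₁(G) > (n + k − 1)/2. -/
/-- The wheel graph on `t` vertices: vertex `0` joined to every vertex of the
cycle `1, 2, …, t-1` (with `t-1` adjacent to `1`). -/
def wheelGraph (t : ℕ) : SimpleGraph (Fin t) where
  Adj a b := a ≠ b ∧ (a.val = 0 ∨ b.val = 0 ∨ a.val + 1 = b.val ∨ b.val + 1 = a.val ∨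
      (a.val = 1 ∧ b.val = t - 1) ∨ (b.val = 1 ∧ a.val = t - 1))
  symm := by
    refine ⟨?_⟩
    intro a b h
    exact ⟨h.1.symm, by tauto⟩
  loopless := by
    refine ⟨?_⟩
    intro a h
    exact h.1 rfl

/-- `G` contains a copy of `F`, i.e. a subgraph isomorphic to `F`. -/
def ContainsCopy {α β : Type*} (F : SimpleGraph α) (G : SimpleGraph β) : Prop :=
  ∃ f : α ↪ β, ∀ a b, F.Adj a b → G.Adj (f a) (f b)

/-- `G` is `W_t`-free: it contains no subgraph isomorphic to the wheel on `t` vertices. -/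
def WheelFree (t : ℕ) {n : ℕ} (G : SimpleGraph (Fin n)) : Prop :=
  ¬ ContainsCopy (wheelGraph t) G

/-- The spectral radius of `G`: the largest eigenvalue of its adjacency matrix. -/
noncomputable def lam1 {n : ℕ} (G : SimpleGraph (Fin n)) : ℝ := by
  classical
  exact sSup {μ : ℝ | Module.End.HasEigenvalue (Matrix.toLin' (G.adjMatrix ℝ)) μ}

/-- The number of edges of a graph on a finite vertex type. -/
noncomputable def edgeCount {V : Type*} [Fintype V] (G : SimpleGraph V) : ℕ := by
  classical
  exact G.edgeFinset.card

/-- The degree of a vertex. -/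
noncomputable def deg {n : ℕ} (G : SimpleGraph (Fin n)) (v : Fin n) : ℕ := by
  classical
  exact G.degree v

/-- The number of neighbours of `v` inside the set `A`. -/
noncomputable def degIn {n : ℕ} (G : SimpleGraph (Fin n)) (A : Finset (Fin n)) (v : Fin n) : ℕ := by
  classical
  exact (A.filter fun u => G.Adj v u).card

/-- The number of edges of `G` with one endpoint in `S` and the other outside `S`. -/
noncomputable def cutCount {n : ℕ} (G : SimpleGraph (Fin n)) (S : Finset (Fin n)) : ℕ := by
  classical
  exact ((Finset.univ : Finset (Fin n × Fin n)).filter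
    fun p => G.Adj p.1 p.2 ∧ p.1 ∈ S ∧ p.2 ∉ S).card

/-- `(S, T)` is a maximum cut of `G`. -/
def IsMaxCut {n : ℕ} (G : SimpleGraph (Fin n)) (S T : Finset (Fin n)) : Prop :=
  T = Sᶜ ∧ ∀ S' : Finset (Fin n), cutCount G S' ≤ cutCount G S

/-- `G` attains the maximum spectral radius among all `n`-vertex `W_t`-free graphs. -/
def IsSpexWheel (t : ℕ) {n : ℕ} (G : SimpleGraph (Fin n)) : Prop :=
  WheelFree t G ∧ ∀ H : SimpleGraph (Fin n), WheelFree t H → lam1 H ≤ lam1 G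

/-- `G` attains the maximum number of edges among all `n`-vertex `W_t`-free graphs. -/
def IsExWheel (t : ℕ) {n : ℕ} (G : SimpleGraph (Fin n)) : Prop :=
  WheelFree t G ∧ ∀ H : SimpleGraph (Fin n), WheelFree t H → edgeCount H ≤ edgeCount G

/-!
The average degree bounds `λ₁` from below, so it suffices to find a `W_{2k+1}`-free graph on `n`
vertices with more than `n (n + k - 1) / 4` edges. Put `d = k - 1` and join a `d`-regular graph `L`,
all of whose components have at most `2d` vertices, to a graph `R` with a single edge, the two
orders being almost equal. A wheel `W_{2d+3}` with hub in `L` has at most `d` of its rim vertices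
in `L`; these cover at most `2d` of the `2d + 2` rim edges, and `R` has only one edge for the rest.
If the hub is in `R`, at most one rim vertex is in `R`, and deleting one rim vertex leaves a path on
`2d + 1` vertices in `L`, which is too large for a component of `L`.
-/

section SpectralRadius

open Matrix
open scoped MatrixOrder

lemma dotProduct_mulVec_le_sSup_spectrum_mul {ι : Type*} [Fintype ι] [DecidableEq ι]
    {A : Matrix ι ι ℝ} (hA : A.IsHermitian) (x : ι → ℝ) :
    x ⬝ᵥ A *ᵥ x ≤ sSup (spectrum ℝ A) * (x ⬝ᵥ x) := by
  have hle : A ≤ algebraMap ℝ _ (sSup (spectrum ℝ A)) :=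
    (le_algebraMap_iff_spectrum_le hA.isSelfAdjoint).2 fun _ hμ =>
      le_csSup A.finite_spectrum.bddAbove hμ
  have hnonneg := (Matrix.le_iff.1 hle).dotProduct_mulVec_nonneg x
  rw [Algebra.algebraMap_eq_smul_one, sub_mulVec, smul_mulVec, one_mulVec, dotProduct_sub,
    dotProduct_smul, star_trivial, smul_eq_mul] at hnonneg
  exact sub_nonneg.1 hnonneg

lemma two_mul_edgeCount_le_lam1_mul {n : ℕ} (G : SimpleGraph (Fin n)) :
    2 * (edgeCount G : ℝ) ≤ lam1 G * n := by
  classical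
  have hlam : lam1 G = sSup (spectrum ℝ (G.adjMatrix ℝ)) := by
    simp only [lam1, Module.End.hasEigenvalue_iff_mem_spectrum, spectrum_toLin', Set.ofPred_mem_eq]
  have hsum : Function.const (Fin n) 1 ⬝ᵥ G.adjMatrix ℝ *ᵥ Function.const _ 1 =
      2 * (edgeCount G : ℝ) := by
    simp only [dotProduct, SimpleGraph.adjMatrix_mulVec_const_apply, Function.const_apply, one_mul,
      mul_one]
    exact_mod_cast G.sum_degrees_eq_twice_card_edges
  have hone : Function.const (Fin n) (1 : ℝ) ⬝ᵥ Function.const _ 1 = n := by simp [dotProduct]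
  rw [← hsum, hlam, ← hone]
  exact dotProduct_mulVec_le_sSup_spectrum_mul (G.isHermitian_adjMatrix ℝ) _

end SpectralRadius

section Graphs

open Finset SimpleGraph

variable {α V W : Type*}

lemma wheelFree_iff_free {t n : ℕ} {G : SimpleGraph (Fin n)} :
    WheelFree t G ↔ (wheelGraph t).Free G :=
  not_congr ⟨fun ⟨f, hf⟩ => ⟨⟨f, fun {a b} => hf a b⟩, f.injective⟩,
    fun ⟨f⟩ => ⟨f.toEmbedding, fun _ _ => f.toHom.map_adj⟩⟩

lemma isContained_of_range_subset_range {F : SimpleGraph α} {G : SimpleGraph V} {H : SimpleGraph W}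
    (e : H ↪g G) (f : Copy F G) (hf : Set.range f ⊆ Set.range e) : F ⊑ H := by
  choose g hg using fun x => hf (Set.mem_range_self x)
  have hadj : ∀ {x y}, F.Adj x y → H.Adj (g x) (g y) := fun {x y} hxy => by
    rw [← e.map_adj_iff, hg, hg]
    exact f.toHom.map_adj hxy
  have hinj : Function.Injective g := fun x y hxy => f.injective <|
    (hg x).symm.trans ((congrArg e hxy).trans (hg y))
  exact ⟨⟨g, hadj⟩, hinj⟩

lemma eq_of_preconnected_of_forall_adj {β : Type*} {F : SimpleGraph α} (hF : F.Preconnected)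
    {c : α → β} (hc : ∀ ⦃x y⦄, F.Adj x y → c x = c y) (x y : α) : c x = c y := by
  obtain ⟨p⟩ := hF x y
  induction p with
  | nil => rfl
  | cons hadj _ ih => exact (hc hadj).trans ih

lemma free_sum_of_preconnected {F : SimpleGraph α} {G : SimpleGraph V} {H : SimpleGraph W}
    (hF : F.Preconnected) (hG : F.Free G) (hH : F.Free H) : F.Free (G ⊕g H) := by
  rintro ⟨f⟩
  have hside : ∀ x y, (f x).isLeft = (f y).isLeft :=
    eq_of_preconnected_of_forall_adj hF fun x y hxy => by
      have hadj : (G ⊕g H).Adj (f x) (f y) := f.toHom.map_adj hxy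
      rcases hx : f x with u | u <;> rcases hy : f y with v | v <;> simp_all
  by_cases hleft : ∃ x, (f x).isLeft
  · obtain ⟨x, hx⟩ := hleft
    refine hG (isContained_of_range_subset_range Embedding.sumInl f ?_)
    rintro _ ⟨y, rfl⟩
    obtain ⟨v, hv⟩ := Sum.isLeft_iff.1 ((hside y x).trans hx)
    exact ⟨v, hv.symm⟩
  · refine hH (isContained_of_range_subset_range Embedding.sumInr f ?_)
    rintro _ ⟨y, rfl⟩
    obtain ⟨w, hw⟩ := Sum.isRight_iff.1 (Sum.not_isLeft.1 (not_exists.1 hleft y))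
    exact ⟨w, hw.symm⟩

lemma free_bot_boxProd_of_preconnected {F : SimpleGraph α} {G : SimpleGraph V}
    (hF : F.Preconnected) (hG : F.Free G) : F.Free ((⊥ : SimpleGraph W) □ G) := by
  rintro ⟨f⟩
  have hfst : ∀ x y, (f x).1 = (f y).1 :=
    eq_of_preconnected_of_forall_adj hF fun x y hxy =>
      ((boxProd_adj.1 (f.toHom.map_adj hxy)).resolve_left And.left).2
  have : Nonempty α := not_isEmpty_iff.1 fun _ => hG .of_isEmpty
  obtain ⟨x⟩ := this
  refine hG (isContained_of_range_subset_range (boxProdRight ⊥ G (f x).1) f ?_)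
  rintro _ ⟨y, rfl⟩
  exact ⟨(f y).2, Prod.ext (hfst x y) rfl⟩

lemma free_of_card_lt_card [Fintype α] [Fintype V] {F : SimpleGraph α} {G : SimpleGraph V}
    (h : Fintype.card V < Fintype.card α) : F.Free G :=
  fun ⟨f⟩ => (Fintype.card_le_of_injective f f.injective).not_gt h

lemma adj_val_of_cycleGraph_adj {m : ℕ} {i j : Fin m} (h : (cycleGraph m).Adj i j) :
    i.val + 1 = j.val ∨ j.val + 1 = i.val ∨
      (i.val = 0 ∧ j.val + 1 = m) ∨ (j.val = 0 ∧ i.val + 1 = m) := by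
  rw [cycleGraph_adj'] at h
  have hij := Fin.coe_sub_iff_le (a := i) (b := j)
  have hij' := Fin.coe_sub_iff_lt (a := i) (b := j)
  have hji := Fin.coe_sub_iff_le (a := j) (b := i)
  have hji' := Fin.coe_sub_iff_lt (a := j) (b := i)
  simp only [Fin.le_def, Fin.lt_def] at *
  omega

lemma wheelGraph_adj_zero_succ {m : ℕ} (i : Fin m) : (wheelGraph (m + 1)).Adj 0 i.succ :=
  ⟨(Fin.succ_ne_zero i).symm, Or.inl rfl⟩

lemma wheelGraph_adj_succ_succ {m : ℕ} {i j : Fin m} (h : (cycleGraph m).Adj i j) :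
    (wheelGraph (m + 1)).Adj i.succ j.succ := by
  have hadj := adj_val_of_cycleGraph_adj h
  refine ⟨(Fin.succ_injective m).ne h.ne, ?_⟩
  simp only [Fin.val_succ]
  omega

lemma exists_copy_cycleGraph_of_copy_wheelGraph {m : ℕ} {G : SimpleGraph V}
    (f : Copy (wheelGraph (m + 1)) G) :
    ∃ (c : V) (g : Copy (cycleGraph m) G), ∀ i, G.Adj c (g i) :=
  ⟨f 0, ⟨⟨fun i => f i.succ, fun h => f.toHom.map_adj (wheelGraph_adj_succ_succ h)⟩,
    f.injective.comp (Fin.succ_injective m)⟩,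
    fun i => f.toHom.map_adj (wheelGraph_adj_zero_succ i)⟩

lemma card_edgeFinset_cycleGraph (m : ℕ) : #(cycleGraph (m + 3)).edgeFinset = m + 3 := by
  have hsum := (cycleGraph (m + 3)).sum_degrees_eq_twice_card_edges
  simp only [cycleGraph_degree_three_le, sum_const, card_univ, Fintype.card_fin, smul_eq_mul]
    at hsum
  omega

lemma exists_copy_pathGraph_cycleGraph_avoiding {m : ℕ} (i : Fin (m + 1)) :
    ∃ g : Copy (pathGraph m) (cycleGraph (m + 1)), ∀ j, g j ≠ i := by
  have hadj : ∀ {j j' : Fin m}, (pathGraph m).Adj j j' →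
      (cycleGraph (m + 1)).Adj (i + j.succ) (i + j'.succ) := fun {j j'} h => by
    rw [cycleGraph_adj', add_sub_add_left_eq_sub, add_sub_add_left_eq_sub]
    rcases pathGraph_adj.1 h with h | h
    · have hle : j.succ ≤ j'.succ := by rw [Fin.le_def, Fin.val_succ, Fin.val_succ]; omega
      rw [Fin.coe_sub_iff_le.2 hle, Fin.val_succ, Fin.val_succ]
      omega
    · have hle : j'.succ ≤ j.succ := by rw [Fin.le_def, Fin.val_succ, Fin.val_succ]; omega
      rw [Fin.coe_sub_iff_le.2 hle, Fin.val_succ, Fin.val_succ]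
      omega
  exact ⟨⟨⟨fun j => i + j.succ, hadj⟩, (add_right_injective i).comp (Fin.succ_injective m)⟩,
    fun j => add_eq_left.not.2 (Fin.succ_ne_zero j)⟩

/-- The join of two graphs: their disjoint union together with all edges between them. -/
def graphJoin (G : SimpleGraph V) (H : SimpleGraph W) : SimpleGraph (V ⊕ W) :=
  (G ⊕g H) ⊔ completeBipartiteGraph V W

variable {G : SimpleGraph V} {H : SimpleGraph W}

@[simp] lemma graphJoin_adj_inl_inl {u v : V} :
    (graphJoin G H).Adj (.inl u) (.inl v) ↔ G.Adj u v := by simp [graphJoin]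

@[simp] lemma graphJoin_adj_inr_inr {u v : W} :
    (graphJoin G H).Adj (.inr u) (.inr v) ↔ H.Adj u v := by simp [graphJoin]

lemma card_edgeFinset_graphJoin [Fintype V] [Fintype W] [Fintype G.edgeSet] [Fintype H.edgeSet]
    [Fintype (graphJoin G H).edgeSet] :
    #(graphJoin G H).edgeFinset =
      #G.edgeFinset + #H.edgeFinset + Fintype.card V * Fintype.card W := by
  classical
  have hdisj : Disjoint (G ⊕g H).edgeSet (completeBipartiteGraph V W).edgeSet := by
    rw [disjoint_edgeSet, SimpleGraph.disjoint_left]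
    rintro (u | u) (v | v) <;> simp
  have hcard : (graphJoin G H).edgeSet.encard =
      G.edgeSet.encard + H.edgeSet.encard + ENat.card V * ENat.card W := by
    rw [graphJoin, edgeSet_sup, Set.encard_union_eq hdisj, encard_edgeSet_completeBipartiteGraph,
      ← ENat.card_coe_set_eq, ENat.card_congr edgeSetSumEquiv, ENat.card_sum,
      ENat.card_coe_set_eq, ENat.card_coe_set_eq]
  simp only [← coe_edgeFinset, Set.encard_coe_eq_coe_finsetCard, ENat.card_eq_coe_fintype_card]
    at hcard
  exact_mod_cast hcard

lemma card_filter_isLeft_le_degree {F : SimpleGraph α} [Fintype α] {u : V}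
    [Fintype (G.neighborSet u)] (f : Copy F (graphJoin G H))
    (hf : ∀ x, (graphJoin G H).Adj (.inl u) (f x)) :
    #{x | (f x).isLeft} ≤ G.degree u := by
  classical
  rw [← card_neighborFinset_eq_degree,
    ← card_map (Function.Embedding.inl : V ↪ V ⊕ W)]
  refine card_le_card_of_injOn f (fun x hx => ?_) f.injective.injOn
  obtain ⟨v, hv⟩ := Sum.isLeft_iff.1 (mem_filter.1 hx).2
  have hadj := hf x
  rw [hv, graphJoin_adj_inl_inl] at hadj
  simpa [hv] using hadj

lemma card_edgeFinset_le_of_copy_graphJoin {F : SimpleGraph α} [Fintype α] [DecidableRel F.Adj]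
    [Fintype H.edgeSet] {d : ℕ} (hF : ∀ x, F.degree x ≤ d) (f : Copy F (graphJoin G H)) :
    #F.edgeFinset ≤ #{x | (f x).isLeft} * d + #H.edgeFinset := by
  classical
  -- An edge of `F` either meets `S` or is sent into `H`.
  set S : Finset α := {x | (f x).isLeft} with hS
  have hcover : F.edgeFinset ⊆
      S.biUnion (fun x => F.incidenceFinset x) ∪ {e ∈ F.edgeFinset | ∀ x ∈ e, x ∉ S} := by
    intro e he
    by_cases h : ∀ x ∈ e, x ∉ S
    · exact mem_union_right _ (mem_filter.2 ⟨he, h⟩)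
    · push Not at h
      obtain ⟨x, hxe, hxS⟩ := h
      exact mem_union_left _ (mem_biUnion.2 ⟨x, hxS, by
        rw [mem_incidenceFinset]; exact ⟨mem_edgeFinset.1 he, hxe⟩⟩)
  have hinc : #(S.biUnion (fun x => F.incidenceFinset x)) ≤ #S * d :=
    card_biUnion_le_card_mul _ _ _ fun x _ => (F.card_incidenceFinset_eq_degree x).trans_le (hF x)
  have hright : #{e ∈ F.edgeFinset | ∀ x ∈ e, x ∉ S} ≤ #H.edgeFinset := by
    rw [← card_map (Function.Embedding.inr.sym2Map : Sym2 W ↪ Sym2 (V ⊕ W))]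
    refine card_le_card_of_injOn (Sym2.map f) (fun e he => ?_)
      (Sym2.map.injective f.injective).injOn
    induction e with | _ x y
    simp only [hS, coe_filter, Set.mem_ofPred_eq, mem_edgeFinset, mem_edgeSet, Sym2.ball,
      mem_filter, mem_univ, true_and, Sum.not_isLeft] at he
    obtain ⟨hxy, hx, hy⟩ := he
    obtain ⟨u, hu⟩ := Sum.isRight_iff.1 hx
    obtain ⟨v, hv⟩ := Sum.isRight_iff.1 hy
    have hadj : (graphJoin G H).Adj (f x) (f y) := f.toHom.map_adj hxy
    rw [hu, hv, graphJoin_adj_inr_inr] at hadj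
    exact mem_coe.2 (mem_map.2 ⟨s(u, v), mem_edgeFinset.2 hadj, by simp [hu, hv]⟩)
  exact (card_le_card hcover).trans ((card_union_le _ _).trans (Nat.add_le_add hinc hright))

lemma card_edgeFinset_le_of_copy_graphJoin_of_adj_inl {F : SimpleGraph α} [Fintype α]
    [DecidableRel F.Adj] [Fintype H.edgeSet] {u : V} [Fintype (G.neighborSet u)] {d : ℕ}
    (hF : ∀ x, F.degree x ≤ d) (f : Copy F (graphJoin G H))
    (hf : ∀ x, (graphJoin G H).Adj (.inl u) (f x)) :
    #F.edgeFinset ≤ G.degree u * d + #H.edgeFinset :=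
  (card_edgeFinset_le_of_copy_graphJoin hF f).trans <|
    Nat.add_le_add_right (Nat.mul_le_mul_right d (card_filter_isLeft_le_degree f hf)) _

lemma exists_forall_ne_isLeft_of_adj_inr {F : SimpleGraph α} [Nonempty α] {w : W}
    (hw : (H.neighborSet w).Subsingleton) (f : Copy F (graphJoin G H))
    (hf : ∀ x, (graphJoin G H).Adj (.inr w) (f x)) : ∃ x₀, ∀ x ≠ x₀, (f x).isLeft := by
  have hadj : ∀ {x v}, f x = .inr v → H.Adj w v := fun {x v} hx =>
    graphJoin_adj_inr_inr.1 (hx ▸ hf x)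
  by_cases h : ∃ x₀, (f x₀).isRight
  · obtain ⟨x₀, hx₀⟩ := h
    obtain ⟨v₀, hv₀⟩ := Sum.isRight_iff.1 hx₀
    refine ⟨x₀, fun x hx => Sum.not_isRight.1 fun hright => hx (f.injective ?_)⟩
    obtain ⟨v, hv⟩ := Sum.isRight_iff.1 hright
    exact hv.trans ((congrArg Sum.inr (hw (hadj hv) (hadj hv₀))).trans hv₀.symm)
  · exact ⟨Classical.arbitrary α, fun x _ => Sum.not_isRight.1 (not_exists.1 h x)⟩

lemma pathGraph_isContained_of_copy_cycleGraph_graphJoin {m : ℕ} {w : W}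
    (hw : (H.neighborSet w).Subsingleton) (f : Copy (cycleGraph (m + 1)) (graphJoin G H))
    (hf : ∀ x, (graphJoin G H).Adj (.inr w) (f x)) : pathGraph m ⊑ G := by
  obtain ⟨i, hi⟩ := exists_forall_ne_isLeft_of_adj_inr hw f hf
  obtain ⟨g, hg⟩ := exists_copy_pathGraph_cycleGraph_avoiding i
  let inl : G ↪g graphJoin G H := ⟨.inl, graphJoin_adj_inl_inl⟩
  refine isContained_of_range_subset_range inl (f.comp g) ?_
  rintro _ ⟨j, rfl⟩
  obtain ⟨v, hv⟩ := Sum.isLeft_iff.1 (hi (g j) (hg j))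
  exact ⟨v, hv.symm⟩

lemma neighborSet_subsingleton_of_card_edgeFinset_le_one [Fintype H.edgeSet]
    (hH : #H.edgeFinset ≤ 1) (w : W) : (H.neighborSet w).Subsingleton := fun _ hu _ hv =>
  Sym2.congr_right.1 <| card_le_one.1 hH _ (mem_edgeFinset.2 hu) _ (mem_edgeFinset.2 hv)

lemma wheelGraph_free_graphJoin {r d : ℕ} [LocallyFinite G] [Fintype H.edgeSet] (hr : 2 ≤ r)
    (hd : 2 * d < r) (hdeg : ∀ v, G.degree v ≤ d) (hpath : (pathGraph r).Free G)
    (hH : #H.edgeFinset ≤ 1) : (wheelGraph (r + 2)).Free (graphJoin G H) := by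
  obtain ⟨m, rfl⟩ := Nat.exists_eq_add_of_le' hr
  rintro ⟨f⟩
  obtain ⟨u | w, g, hg⟩ := exists_copy_cycleGraph_of_copy_wheelGraph f
  · have hle := card_edgeFinset_le_of_copy_graphJoin_of_adj_inl
      (fun x => cycleGraph_degree_three_le.le) g hg
    rw [card_edgeFinset_cycleGraph] at hle
    have := hdeg u
    omega
  · exact hpath <| pathGraph_isContained_of_copy_cycleGraph_graphJoin
      (neighborSet_subsingleton_of_card_edgeFinset_le_one hH w) g hg

lemma isRegularOfDegree_sum [LocallyFinite G] [LocallyFinite H] [LocallyFinite (G ⊕g H)] {d : ℕ}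
    (hG : G.IsRegularOfDegree d) (hH : H.IsRegularOfDegree d) :
    (G ⊕g H).IsRegularOfDegree d := by
  rintro (v | w)
  · rw [← card_neighborSet_eq_degree, ← Nat.card_eq_fintype_card, neighborSet_sum_inl,
      Nat.card_image_of_injective Sum.inl_injective, Nat.card_eq_fintype_card,
      card_neighborSet_eq_degree, hG v]
  · rw [← card_neighborSet_eq_degree, ← Nat.card_eq_fintype_card, neighborSet_sum_inr,
      Nat.card_image_of_injective Sum.inr_injective, Nat.card_eq_fintype_card,
      card_neighborSet_eq_degree, hH w]

lemma isRegularOfDegree_bot_boxProd [LocallyFinite G] [LocallyFinite ((⊥ : SimpleGraph W) □ G)]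
    {d : ℕ} (hG : G.IsRegularOfDegree d) : ((⊥ : SimpleGraph W) □ G).IsRegularOfDegree d :=
  fun x => by
    have : IsEmpty ((⊥ : SimpleGraph W).neighborSet x.1) := ⟨fun y => y.2⟩
    let : Fintype ((⊥ : SimpleGraph W).neighborSet x.1) := Fintype.ofIsEmpty
    rw [degree_boxProd, hG x.2, ← card_neighborSet_eq_degree, Fintype.card_eq_zero, zero_add]

lemma two_mul_card_edgeFinset_of_isRegularOfDegree [Fintype V] [LocallyFinite G]
    [Fintype G.edgeSet] {d : ℕ} (hG : G.IsRegularOfDegree d) :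
    2 * #G.edgeFinset = Fintype.card V * d := by
  classical
  have hsum : ∑ v, G.degree v = 2 * #G.edgeFinset := by
    convert G.sum_degrees_eq_twice_card_edges
  rw [← hsum, sum_congr rfl fun v _ => hG v, sum_const, card_univ,
    smul_eq_mul]

/-- The disjoint union of `p` copies of `K_{d+1}` and `q` copies of `K_{d,d}`. It supplies
`d`-regular graphs whose components have at most `2d` vertices, on every large even order. -/
abbrev cliquesAndBicliques (d p q : ℕ) :
    SimpleGraph ((Fin p × Fin (d + 1)) ⊕ (Fin q × (Fin 2 × Fin d))) :=
  (⊥ □ ⊤) ⊕g (⊥ □ completeEquipartiteGraph 2 d)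

lemma isRegularOfDegree_cliquesAndBicliques (d p q : ℕ)
    [LocallyFinite (cliquesAndBicliques d p q)] :
    (cliquesAndBicliques d p q).IsRegularOfDegree d := by
  classical
  refine isRegularOfDegree_sum (isRegularOfDegree_bot_boxProd fun v => ?_)
    (isRegularOfDegree_bot_boxProd fun v => ?_)
  · rw [IsRegularOfDegree.top v, Fintype.card_fin, Nat.add_sub_cancel]
  · rw [degree_completeEquipartiteGraph, Nat.add_one_sub_one, one_mul]

lemma pathGraph_free_cliquesAndBicliques {d : ℕ} (hd : 1 ≤ d) (p q : ℕ) :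
    (pathGraph (2 * d + 1)).Free (cliquesAndBicliques d p q) := by
  have hpath := pathGraph_preconnected (2 * d + 1)
  refine free_sum_of_preconnected hpath
    (free_bot_boxProd_of_preconnected hpath (free_of_card_lt_card ?_))
    (free_bot_boxProd_of_preconnected hpath (free_of_card_lt_card ?_))
  · simp only [Fintype.card_fin]
    omega
  · simp only [Fintype.card_prod, Fintype.card_fin]
    omega

lemma exists_mul_add_one_add_mul_two_mul_eq {d a : ℕ} (ha : Even a) (hle : 2 * d ^ 2 ≤ a) :
    ∃ p q, p * (d + 1) + q * (2 * d) = a := by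
  refine Nat.exists_add_mul_eq_of_gcd_dvd_of_mul_pred_le _ _ _ (dvd_trans ?_ ha.two_dvd) ?_
  · -- A common divisor of `d + 1` and `2 * d` divides `2 * (d + 1) - 2 * d = 2`.
    exact (Nat.dvd_add_right (Nat.gcd_dvd_right (d + 1) (2 * d))).1
      ((Nat.gcd_dvd_left (d + 1) (2 * d)).mul_left 2)
  · rw [Nat.pred_eq_sub_one, Nat.pred_eq_sub_one, Nat.add_sub_cancel]
    refine le_trans (Nat.mul_le_mul_left d (Nat.sub_le _ _)) ?_
    linarith

lemma card_edgeFinset_edge {s t : V} [Fintype (edge s t).edgeSet] (h : s ≠ t) :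
    #(edge s t).edgeFinset = 1 := by
  rw [← Nat.cast_inj (R := ℕ∞), ← Set.encard_coe_eq_coe_finsetCard, coe_edgeFinset,
    edgeSet_edge_of_ne h, Set.encard_singleton, Nat.cast_one]

lemma edgeCount_overFin [Fintype V] [Fintype G.edgeSet] {n : ℕ} (hn : Fintype.card V = n) :
    edgeCount (G.overFin hn) = #G.edgeFinset := by
  classical
  rw [edgeCount, ← (G.overFinIso hn).card_edgeFinset_eq]

lemma wheelFree_overFin [Fintype V] {t n : ℕ} (hn : Fintype.card V = n) :
    WheelFree t (G.overFin hn) ↔ (wheelGraph t).Free G :=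
  wheelFree_iff_free.trans (free_congr_right (G.overFinIso hn)).symm

lemma exists_wheelFree_two_mul_edgeCount_eq {d a b : ℕ} (hd : 1 ≤ d) (ha : Even a)
    (hle : 2 * d ^ 2 ≤ a) (hb : 2 ≤ b) :
    ∃ G : SimpleGraph (Fin (a + b)),
      WheelFree (2 * d + 3) G ∧ 2 * edgeCount G = 2 * (a * b) + a * d + 2 := by
  classical
  obtain ⟨p, q, hpq⟩ := exists_mul_add_one_add_mul_two_mul_eq ha hle
  let L := cliquesAndBicliques d p q
  let R : SimpleGraph (Fin b) := edge ⟨0, by omega⟩ ⟨1, by omega⟩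
  have hL : L.IsRegularOfDegree d := isRegularOfDegree_cliquesAndBicliques d p q
  have hcardL : Fintype.card ((Fin p × Fin (d + 1)) ⊕ (Fin q × (Fin 2 × Fin d))) = a := by
    simpa using hpq
  have hcard : Fintype.card (((Fin p × Fin (d + 1)) ⊕ (Fin q × (Fin 2 × Fin d))) ⊕ Fin b) =
      a + b := by rw [Fintype.card_sum, hcardL, Fintype.card_fin]
  have hR : #R.edgeFinset = 1 := card_edgeFinset_edge (by simp)
  refine ⟨(graphJoin L R).overFin hcard, (wheelFree_overFin hcard).2 ?_, ?_⟩
  · exact wheelGraph_free_graphJoin (by omega) (Nat.lt_succ_self _) (fun v => (hL v).le)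
      (pathGraph_free_cliquesAndBicliques hd p q) hR.le
  · have hLedges := two_mul_card_edgeFinset_of_isRegularOfDegree hL
    rw [edgeCount_overFin, card_edgeFinset_graphJoin, hR, mul_add, mul_add, hLedges, hcardL,
      Fintype.card_fin]
    ring

end Graphs

lemma exists_balanced_split {d n : ℕ} (hd : 1 ≤ d) (hn : 4 * d ^ 2 + 8 ≤ n) :
    ∃ a b : ℕ, a + b = n ∧ Even a ∧ 2 * d ^ 2 ≤ a ∧ 2 ≤ b ∧
      n * (n + d) < 2 * (2 * (a * b) + a * d + 2) := by
  -- With `s = a - b` the two sides differ by `s (d - s) + 4`. Since `s = 2 a - n` and `a` is even,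
  -- `s` can be found among any four consecutive integers: `-1, …, 2` work for `d = 1` and
  -- `0, …, 3` for larger `d`.
  set c := (n + min (d + 1) 3) / 4 with hc
  obtain ⟨b, hb⟩ : ∃ b, n = 2 * c + b := Nat.exists_eq_add_of_le (by omega)
  refine ⟨2 * c, b, hb.symm, even_two_mul c, by omega, by omega, ?_⟩
  obtain ⟨s, hs⟩ : ∃ s : ℤ, s = 2 * c - b := ⟨_, rfl⟩
  have hs_pos : 0 < s * (d - s) + 4 := by
    rcases hd.eq_or_lt with rfl | hd
    · have : -1 ≤ s := by omega
      have : s ≤ 2 := by omega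
      interval_cases s <;> norm_num
    · have : 0 ≤ s := by omega
      have : s ≤ 3 := by omega
      interval_cases s <;> omega
  have hdiff : (2 * (2 * (2 * c * b) + 2 * c * d + 2) : ℤ) - (2 * c + b) * (2 * c + b + d) =
      s * (d - s) + 4 := by rw [hs]; ring
  rw [hb]
  zify
  linarith

/-- Spectral extremal `W_{2k+1}`-free graphs have
`λ₁(G) > (n + k - 1)/2`. -/
theorem spex_lower_bound (k : ℕ) (hk : 2 ≤ k) :
    ∃ N : ℕ, ∀ n : ℕ, N ≤ n → ∀ G : SimpleGraph (Fin n),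
      IsSpexWheel (2 * k + 1) G → ((n : ℝ) + (k : ℝ) - 1) / 2 < lam1 G := by
  obtain ⟨d, rfl⟩ := Nat.exists_eq_add_of_le' hk
  refine ⟨4 * (d + 1) ^ 2 + 8, fun n hn G hG => ?_⟩
  obtain ⟨a, b, rfl, ha, hle, hb, hlt⟩ := exists_balanced_split (Nat.le_add_left 1 d) hn
  obtain ⟨H, hfree, hedges⟩ := exists_wheelFree_two_mul_edgeCount_eq (Nat.le_add_left 1 d) ha hle hb
  have hHG : lam1 H ≤ lam1 G := hG.2 H hfree
  have hpos : (0 : ℝ) < (a + b : ℕ) := by exact_mod_cast (by omega : 0 < a + b)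
  refine lt_of_mul_lt_mul_right ?_ hpos.le
  calc ((a + b : ℕ) + ((d + 2 : ℕ) : ℝ) - 1) / 2 * (a + b : ℕ)
      = ((a + b) * (a + b + (d + 1)) : ℕ) / 2 := by push_cast; ring
    _ < (2 * (2 * edgeCount H) : ℕ) / 2 := by rw [hedges]; gcongr
    _ = 2 * (edgeCount H : ℝ) := by push_cast; ring
    _ ≤ lam1 H * (a + b : ℕ) := two_mul_edgeCount_le_lam1_mul H
    _ ≤ lam1 G * (a + b : ℕ) := by gcongr
end

section
/- Let k ≥ 2 be an integer. For all sufficiently large n, if G is an n-vertex W_{2k+1}-free simple graph attaining the maximum spectral radius among all n-vertex W_{2k+1}-free graphs and V(G) = S ⊔ T is a maximum cut of G, then n/2 − √(3nk/2) ≤ |S| ≤ n/2 + √(3nk/2) and n/2 − √(3nk/2) ≤ |T| ≤ n/2 + √(3nk/2). -/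
section

open Finset SimpleGraph

/-! ### Wheels -/

theorem not_containsCopy_wheelGraph_of_cliqueFree {V : Type*} {G : SimpleGraph V}
    (hG : G.CliqueFree 3) {k : ℕ} (hk : 1 ≤ k) : ¬ ContainsCopy (wheelGraph (2 * k + 1)) G := by
  classical
  rintro ⟨f, hf⟩
  have adj (a b : Fin (2 * k + 1)) (ha : a.val < b.val)
      (hab : a.val = 0 ∨ a.val + 1 = b.val) : G.Adj (f a) (f b) :=
    hf a b ⟨fun h => ha.ne (congrArg Fin.val h), by tauto⟩
  let a (i : Fin 3) : Fin (2 * k + 1) := ⟨i.val, by omega⟩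
  exact hG _ (is3Clique_triple_iff.2 ⟨adj (a 0) (a 1) (by simp [a]) (by simp [a]),
    adj (a 0) (a 2) (by simp [a]) (by simp [a]),
    adj (a 1) (a 2) (by simp [a]) (by simp [a])⟩)

theorem containsCopy_wheelGraph_of_rim {V : Type*} {G : SimpleGraph V} {k : ℕ} {u : V}
    {rim : Fin (2 * k) → V} (rim_injective : Function.Injective rim)
    (hub_adj : ∀ i, G.Adj u (rim i))
    (rim_adj : ∀ i j : Fin (2 * k), (Even i.val ↔ ¬ Even j.val) → G.Adj (rim i) (rim j)) :
    ContainsCopy (wheelGraph (2 * k + 1)) G := by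
  refine ⟨⟨Fin.cons u rim, Fin.cons_injective_iff.2 ⟨?_, rim_injective⟩⟩, ?_⟩
  · rintro ⟨i, hi⟩
    exact (hub_adj i).ne hi.symm
  · intro a b hab
    induction a using Fin.cases with
    | zero =>
      induction b using Fin.cases with
      | zero => exact absurd rfl hab.1
      | succ j => exact hub_adj j
    | succ i =>
      induction b using Fin.cases with
      | zero => exact (hub_adj i).symm
      | succ j =>
        apply rim_adj
        have := hab.2
        simp only [Fin.val_succ] at this
        grind

-- Odd and even rim vertices of the wheel are placed on the two sides of the biclique.
theorem containsCopy_wheelGraph_of_isCompleteBetween {V : Type*} {G : SimpleGraph V} {k : ℕ} {u : V}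
    {P Q : Finset V} (hPk : #P = k) (hQk : #Q = k) (hP : ∀ p ∈ P, G.Adj u p)
    (hQ : ∀ q ∈ Q, G.Adj u q) (hPQ : G.IsCompleteBetween (P : Set V) Q) :
    ContainsCopy (wheelGraph (2 * k + 1)) G := by
  let p := P.equivFinOfCardEq hPk
  let q := Q.equivFinOfCardEq hQk
  let half (i : Fin (2 * k)) : Fin k := ⟨i / 2, by omega⟩
  let rim (i : Fin (2 * k)) : V := if Even i.val then p.symm (half i) else q.symm (half i)
  have rim_adj (i j : Fin (2 * k)) (hij : Even i.val ↔ ¬ Even j.val) : G.Adj (rim i) (rim j) := by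
    by_cases hi : Even i.val
    · simpa [rim, hi, hij.1 hi] using hPQ (p.symm (half i)).2 (q.symm (half j)).2
    · simpa [rim, hi, not_not.1 (mt hij.2 hi)] using
        (hPQ (p.symm (half j)).2 (q.symm (half i)).2).symm
  have hub_adj (i : Fin (2 * k)) : G.Adj u (rim i) := by
    by_cases hi : Even i.val
    · simpa [rim, hi] using hP _ (p.symm (half i)).2
    · simpa [rim, hi] using hQ _ (q.symm (half i)).2
  have rim_injective : Function.Injective rim := by
    intro i j hij
    have hparity : Even i.val ↔ Even j.val := by
      by_contra h
      exact (rim_adj i j (by tauto)).ne hij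
    have hhalf : half i = half j := by
      by_cases hi : Even i.val
      · simpa [rim, hi, ← hparity] using hij
      · simpa [rim, hi, ← hparity] using hij
    have : i.val / 2 = j.val / 2 := congrArg Fin.val hhalf
    ext
    grind
  exact containsCopy_wheelGraph_of_rim rim_injective hub_adj rim_adj

/-! ### Sparse neighbourhoods -/

theorem extremalNumber_le_sq {W : Type*} (H : SimpleGraph W) (n : ℕ) :
    extremalNumber n H ≤ n ^ 2 := by
  rw [← Fintype.card_fin n, extremalNumber_le_iff]
  intro G _ _
  exact G.card_edgeFinset_le_card_choose_two.trans (Nat.choose_le_pow _ 2)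

theorem extremalNumber_succ_le {W : Type*} (H : SimpleGraph W) {n : ℕ} {δ : ℝ} (hδ : 0 ≤ δ)
    (h : ∀ (G : SimpleGraph (Fin (n + 1))) [DecidableRel G.Adj], H.Free G → G.minDegree ≤ δ) :
    (extremalNumber (n + 1) H : ℝ) ≤ extremalNumber n H + δ := by
  rw [← Fintype.card_fin (n + 1), extremalNumber_le_iff_of_nonneg _ (by positivity)]
  intro G _ hG
  obtain ⟨v, hv⟩ := G.exists_minimal_degree_vertex
  have hdel := card_edgeFinset_deleteIncidenceSet_le_extremalNumber hG v
  rw [card_edgeFinset_deleteIncidenceSet, Fintype.card_fin, Nat.add_sub_cancel, ← hv] at hdel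
  have hadd : (#G.edgeFinset : ℝ) ≤ extremalNumber n H + G.minDegree :=
    mod_cast Nat.sub_le_iff_le_add.1 hdel
  linarith [h G hG]

-- By the minimum-degree form of the Erdős–Stone theorem, deleting a vertex of minimum degree
-- loses at most `ε n` edges.
theorem exists_forall_extremalNumber_completeEquipartiteGraph_two_le (t : ℕ) {ε : ℝ} (hε : 0 < ε) :
    ∃ C : ℝ, ∀ n : ℕ, (extremalNumber n (completeEquipartiteGraph 2 t) : ℝ) ≤ C + ε * n ^ 2 := by
  obtain ⟨N, hN⟩ := Filter.eventually_atTop.1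
    (eventually_completeEquipartiteGraph_isContained_of_minDegree hε 1 t)
  refine ⟨N ^ 2, fun n => ?_⟩
  rcases le_total n N with hn | hn
  · calc (extremalNumber n (completeEquipartiteGraph 2 t) : ℝ) ≤ n ^ 2 :=
          mod_cast extremalNumber_le_sq _ n
      _ ≤ N ^ 2 := by gcongr
      _ ≤ N ^ 2 + ε * n ^ 2 := le_add_of_nonneg_right (by positivity)
  · induction n, hn using Nat.le_induction with
    | base =>
      have : (extremalNumber N (completeEquipartiteGraph 2 t) : ℝ) ≤ N ^ 2 :=
        mod_cast extremalNumber_le_sq _ N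
      exact le_add_of_le_of_nonneg this (by positivity)
    | succ n hn ih =>
      have hdeg (G : SimpleGraph (Fin (n + 1))) [DecidableRel G.Adj]
          (hG : (completeEquipartiteGraph 2 t).Free G) : G.minDegree ≤ ε * (n + 1) := by
        by_contra! h
        exact hG (hN _ (by omega) (by simpa using h.le))
      have hstep := extremalNumber_succ_le _ (by positivity) hdeg
      push_cast
      nlinarith

theorem completeEquipartiteGraph_two_free_induce_neighborSet {V : Type*} {G : SimpleGraph V} {k : ℕ}
    (hG : ¬ ContainsCopy (wheelGraph (2 * k + 1)) G) (u : V) :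
    (completeEquipartiteGraph 2 k).Free (G.induce (G.neighborSet u)) := by
  rintro ⟨f⟩
  let part (a : Fin 2) : Finset V :=
    univ.map ⟨fun i => (f (a, i)).1, fun i j h => by simpa using f.injective (Subtype.ext h)⟩
  have adj_of_mem_part (a : Fin 2) : ∀ v ∈ part a, G.Adj u v := by
    simp only [part, mem_map, mem_univ, true_and, forall_exists_index]
    rintro _ i rfl
    exact (f (a, i)).2
  refine hG (containsCopy_wheelGraph_of_isCompleteBetween (P := part 0) (Q := part 1)
    (by simp [part]) (by simp [part]) (adj_of_mem_part 0) (adj_of_mem_part 1) ?_)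
  simp only [IsCompleteBetween, part, coe_map, coe_univ, Set.image_univ, Set.forall_mem_range]
  exact fun i j => f.toHom.map_adj (v := (0, i)) (w := (1, j)) (by simp)

theorem card_edgeFinset_induce_neighborFinset_le {V : Type*} [Fintype V] {G : SimpleGraph V}
    [DecidableRel G.Adj] {k : ℕ} (hG : ¬ ContainsCopy (wheelGraph (2 * k + 1)) G) (u : V) :
    #(G.induce (G.neighborFinset u : Set V)).edgeFinset ≤
      extremalNumber (G.degree u) (completeEquipartiteGraph 2 k) := by
  classical
  have hfree := completeEquipartiteGraph_two_free_induce_neighborSet hG u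
  rw [← coe_neighborFinset] at hfree
  simpa only [coe_sort_coe, Fintype.card_coe, card_neighborFinset_eq_degree] using
    card_edgeFinset_le_extremalNumber hfree

section

variable {V : Type*} {G : SimpleGraph V} {S : Finset V}

/-! ### Cuts -/

/-- The bipartite graph formed by the edges of `G` crossing the cut `(S, Sᶜ)`. -/
abbrev cutGraph (G : SimpleGraph V) (S : Finset V) : SimpleGraph V :=
  G.between S (S : Set V)ᶜ

/-- The graph formed by the edges of `G` inside the two sides of the cut `(S, Sᶜ)`. -/
abbrev sideGraph (G : SimpleGraph V) (S : Finset V) : SimpleGraph V :=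
  G \ cutGraph G S

theorem cutGraph_adj {v w : V} : (cutGraph G S).Adj v w ↔ G.Adj v w ∧ (v ∈ S ↔ w ∉ S) := by
  simp only [between_adj, mem_coe, Set.mem_compl_iff]
  tauto

theorem sideGraph_adj {v w : V} : (sideGraph G S).Adj v w ↔ G.Adj v w ∧ (v ∈ S ↔ w ∈ S) := by
  rw [sdiff_adj, cutGraph_adj]
  tauto

theorem cliqueFree_three_cutGraph : (cutGraph G S).CliqueFree 3 :=
  (between_isBipartite disjoint_compl_right).cliqueFree (by norm_num)

theorem cutGraph_top_sdiff_cutGraph : cutGraph ⊤ S \ cutGraph G S = cutGraph Gᶜ S := by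
  ext v w
  simp only [sdiff_adj, cutGraph_adj, top_adj, compl_adj]
  tauto

theorem sum_neighborFinset_sdiff_add {M : Type*} [AddCommMonoid M] [Fintype V] {H : SimpleGraph V}
    [DecidableRel G.Adj] [DecidableRel H.Adj] (h : H ≤ G) (f : V → M) (v : V) :
    ∑ w ∈ (G \ H).neighborFinset v, f w + ∑ w ∈ H.neighborFinset v, f w =
      ∑ w ∈ G.neighborFinset v, f w := by
  classical
  have hsub : H.neighborFinset v ⊆ G.neighborFinset v := by
    simpa [neighborFinset_eq_filter] using monotone_filter_right _ fun w _ => @h v w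
  rw [← sum_sdiff hsub]
  congr 2
  ext w
  simp

theorem degree_sdiff_add_degree [Fintype V] {H : SimpleGraph V} [DecidableRel G.Adj]
    [DecidableRel H.Adj] (h : H ≤ G) (v : V) : (G \ H).degree v + H.degree v = G.degree v := by
  simp only [← card_neighborFinset_eq_degree, card_eq_sum_ones]
  exact sum_neighborFinset_sdiff_add h (fun _ => 1) v

variable [Fintype V] [DecidableEq V]

theorem neighborFinset_cutGraph_top (v : V) :
    (cutGraph ⊤ S).neighborFinset v = if v ∈ S then Sᶜ else S := by
  ext w
  split_ifs with hv <;> simp only [mem_neighborFinset, cutGraph_adj, top_adj, mem_compl] <;> grind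

theorem degree_cutGraph_top (v : V) :
    (cutGraph ⊤ S).degree v = if v ∈ S then #Sᶜ else #S := by
  rw [← card_neighborFinset_eq_degree, neighborFinset_cutGraph_top, apply_ite Finset.card]

theorem card_edgeFinset_cutGraph_top : #(cutGraph (⊤ : SimpleGraph V) S).edgeFinset = #S * #Sᶜ := by
  rw [← isBipartiteWith_sum_degrees_eq_card_edges (t := Sᶜ) (s := S)]
  · rw [sum_congr rfl fun v hv => (degree_cutGraph_top v).trans (if_pos hv), sum_const, smul_eq_mul]
  · simpa using between_isBipartiteWith disjoint_compl_right

theorem degree_cutGraph_compl_add_degree_cutGraph [DecidableRel G.Adj] (v : V) :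
    (cutGraph Gᶜ S).degree v + (cutGraph G S).degree v = (cutGraph ⊤ S).degree v := by
  have hle : cutGraph G S ≤ cutGraph ⊤ S := fun _ _ h => ⟨h.1.ne, h.2⟩
  rw [← degree_sdiff_add_degree hle v]
  congr! 2
  exact cutGraph_top_sdiff_cutGraph.symm

theorem card_edgeFinset_cutGraph_compl_add [DecidableRel G.Adj] :
    #(cutGraph Gᶜ S).edgeFinset + #(cutGraph G S).edgeFinset = #S * #Sᶜ := by
  have h := sum_congr rfl fun v (_ : v ∈ univ) =>
    degree_cutGraph_compl_add_degree_cutGraph (G := G) (S := S) v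
  simp only [sum_add_distrib, sum_degrees_eq_twice_card_edges, card_edgeFinset_cutGraph_top] at h
  omega

theorem cutCount_eq_card_edgeFinset {n : ℕ} (G : SimpleGraph (Fin n)) [DecidableRel G.Adj]
    (S : Finset (Fin n)) : cutCount G S = #(cutGraph G S).edgeFinset := by
  rw [← isBipartiteWith_sum_degrees_eq_card_edges (t := Sᶜ) (s := S)]
  · simp only [cutCount, ← card_neighborFinset_eq_degree, ← card_sigma]
    refine card_nbij' (fun p => ⟨p.1, p.2⟩) (fun p => (p.1, p.2)) ?_ ?_ ?_ ?_ <;>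
      simp +contextual [Set.MapsTo, cutGraph_adj, Set.LeftInvOn]
  · simpa using between_isBipartiteWith disjoint_compl_right

/-- Moving `v` across the cut turns the edges at `v` that stayed inside its side into crossing
edges, and leaves the edges away from `v` alone. -/
theorem degree_sideGraph_le_degree_cutGraph [DecidableRel G.Adj]
    (hS : ∀ S' : Finset V, #(cutGraph G S').edgeFinset ≤ #(cutGraph G S).edgeFinset) (v : V) :
    (sideGraph G S).degree v ≤ (cutGraph G S).degree v := by
  let S' := symmDiff S {v}
  have hdel : (cutGraph G S').deleteIncidenceSet v = (cutGraph G S).deleteIncidenceSet v := by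
    ext a b
    simp only [deleteIncidenceSet_adj, cutGraph_adj, S', mem_symmDiff, mem_singleton]
    grind
  have hdeg : (cutGraph G S').degree v = (sideGraph G S).degree v := by
    simp only [← card_neighborFinset_eq_degree]
    congr 1
    ext w
    simp only [mem_neighborFinset, cutGraph_adj, sideGraph_adj, S', mem_symmDiff, mem_singleton]
    grind [G.ne_of_adj]
  have hcard := card_edgeFinset_deleteIncidenceSet (cutGraph G S') v
  have hcard' := card_edgeFinset_deleteIncidenceSet (cutGraph G S) v
  have heq : #((cutGraph G S').deleteIncidenceSet v).edgeFinset =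
      #((cutGraph G S).deleteIncidenceSet v).edgeFinset := by
    congr! 2
  have hle := (cutGraph G S').degree_le_card_edgeFinset v
  have hle' := (cutGraph G S).degree_le_card_edgeFinset v
  grind

theorem sum_degree_eq_card_edgeFinset_cutGraph_add [DecidableRel G.Adj] (A : Finset V) :
    ∑ v ∈ A, G.degree v =
      #(cutGraph G A).edgeFinset + 2 * #(G.induce (A : Set V)).edgeFinset := by
  have hsum : ∑ v ∈ A, (cutGraph G A).degree v = #(cutGraph G A).edgeFinset :=
    isBipartiteWith_sum_degrees_eq_card_edges (t := Aᶜ)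
      (by simpa using between_isBipartiteWith disjoint_compl_right)
  have hdeg (v : (A : Set V)) : G.degree v =
      (cutGraph G A).degree v + (G.induce (A : Set V)).degree v := by
    have hv : (v : V) ∈ A := v.2
    have hmap : (G.induce (A : Set V)).degree v = #(G.neighborFinset v ∩ A) := by
      rw [← card_neighborFinset_eq_degree, ← card_map (.subtype (· ∈ (A : Set V)))]
      congr 1
      ext w
      simp
    rw [hmap, ← card_neighborFinset_eq_degree, ← card_neighborFinset_eq_degree,
      ← card_sdiff_add_card_inter _ A]
    congr 2
    ext w
    simp only [mem_sdiff, mem_neighborFinset, cutGraph_adj, hv, true_iff]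
  rw [← hsum, ← sum_degrees_eq_twice_card_edges, ← Finset.sum_coe_sort A, ← Finset.sum_coe_sort A]
  exact (sum_congr rfl fun v _ => hdeg v).trans sum_add_distrib

end

section

variable {V : Type*} [Fintype V] {G : SimpleGraph V} [DecidableRel G.Adj] {μ : ℝ} {y : V → ℝ}

/-! ### Spectral radius -/

/-- A unit vector `y ≥ 0` with `μ y ≤ A y`, where `A` is the adjacency matrix of `G`. It stands in
for the Perron vector, whose existence is then not needed. -/
structure IsSubeigenvector (G : SimpleGraph V) [DecidableRel G.Adj] (μ : ℝ) (y : V → ℝ) : Prop where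
  nonneg : 0 ≤ y
  sum_sq : ∑ v, y v ^ 2 = 1
  mul_le : ∀ v, μ * y v ≤ ∑ w ∈ G.neighborFinset v, y w

theorem exists_isSubeigenvector_of_hasEigenvalue [DecidableEq V]
    (h : Module.End.HasEigenvalue (Matrix.toLin' (G.adjMatrix ℝ)) μ) :
    ∃ y, IsSubeigenvector G |μ| y := by
  obtain ⟨x, hx⟩ := h.exists_hasEigenvector
  have hxv (v : V) : μ * x v = ∑ w ∈ G.neighborFinset v, x w := by
    simpa using (congrFun hx.apply_eq_smul v).symm
  have hpos : 0 < ∑ v, x v ^ 2 := by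
    obtain ⟨v, hv⟩ := Function.ne_iff.1 hx.2
    exact sum_pos' (fun _ _ => sq_nonneg _) ⟨v, mem_univ v, sq_pos_of_ne_zero hv⟩
  refine ⟨fun v => |x v| / √(∑ v, x v ^ 2), fun v => by positivity, ?_, fun v => ?_⟩
  · simp only [div_pow, sq_abs, Real.sq_sqrt hpos.le, ← sum_div, div_self hpos.ne']
  · rw [← sum_div, ← mul_div_assoc, ← abs_mul, hxv]
    gcongr
    exact abs_sum_le_sum_abs _ _

theorem hasEigenvalue_lam1 {n : ℕ} {G : SimpleGraph (Fin n)} [DecidableRel G.Adj]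
    (h : 0 < lam1 G) : Module.End.HasEigenvalue (Matrix.toLin' (G.adjMatrix ℝ)) (lam1 G) := by
  set E := {μ : ℝ | Module.End.HasEigenvalue (Matrix.toLin' (G.adjMatrix ℝ)) μ}
  have hlam : lam1 G = sSup E := by
    unfold lam1
    congr!
  have hne : E.Nonempty := by
    by_contra! hempty
    simp [hlam, hempty] at h
  rw [hlam]
  exact hne.csSup_mem (Module.End.finite_hasEigenvalue _)

theorem le_lam1_of_hasEigenvalue {n : ℕ} {G : SimpleGraph (Fin n)} [DecidableRel G.Adj]
    (h : Module.End.HasEigenvalue (Matrix.toLin' (G.adjMatrix ℝ)) μ) : μ ≤ lam1 G := by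
  refine le_csSup (Module.End.finite_hasEigenvalue _).bddAbove ?_
  change Module.End.HasEigenvalue _ μ
  convert! h

namespace IsSubeigenvector

variable (h : IsSubeigenvector G μ y)
include h

theorem sum_sq_le_one (s : Finset V) : ∑ v ∈ s, y v ^ 2 ≤ 1 :=
  h.sum_sq ▸ sum_le_sum_of_subset_of_nonneg (subset_univ s) fun _ _ _ => sq_nonneg _

theorem sq_sum_le_card (s : Finset V) : (∑ v ∈ s, y v) ^ 2 ≤ #s := by
  have := sq_sum_le_card_mul_sum_sq (s := s) (f := y)
  have := h.sum_sq_le_one s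
  nlinarith [(#s).cast_nonneg (α := ℝ)]

theorem exists_sq_le_sum_degree (hμ : 0 ≤ μ) :
    ∃ u, μ ^ 2 ≤ ∑ v ∈ G.neighborFinset u, (G.degree v : ℝ) := by
  have hne : (univ : Finset V).Nonempty := by
    by_contra hempty
    simpa [not_nonempty_iff_eq_empty.1 hempty] using h.sum_sq
  obtain ⟨u, -, hu⟩ := exists_max_image univ y hne
  replace hu (v) : y v ≤ y u := hu v (mem_univ v)
  have hupos : 0 < y u := by
    refine (h.nonneg u).lt_of_ne fun h0 => ?_
    have hzero (v) : y v = 0 := le_antisymm ((hu v).trans_eq h0.symm) (h.nonneg v)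
    simpa [hzero] using h.sum_sq
  refine ⟨u, le_of_mul_le_mul_right ?_ hupos⟩
  calc μ ^ 2 * y u = μ * (μ * y u) := by ring
    _ ≤ μ * ∑ v ∈ G.neighborFinset u, y v := by gcongr; exact h.mul_le u
    _ = ∑ v ∈ G.neighborFinset u, μ * y v := mul_sum _ _ _
    _ ≤ ∑ v ∈ G.neighborFinset u, ∑ _w ∈ G.neighborFinset v, y u := by
      refine sum_le_sum fun v _ => (h.mul_le v).trans (sum_le_sum fun w _ => hu w)
    _ = (∑ v ∈ G.neighborFinset u, (G.degree v : ℝ)) * y u := by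
      simp only [sum_const, nsmul_eq_mul, card_neighborFinset_eq_degree, sum_mul]

theorem mul_le_sqrt_card (v : V) : μ * y v ≤ √(Fintype.card V) :=
  calc μ * y v ≤ ∑ w ∈ G.neighborFinset v, y w := h.mul_le v
    _ ≤ ∑ w, y w := sum_le_univ_sum_of_nonneg h.nonneg
    _ ≤ √(Fintype.card V) := Real.le_sqrt_of_sq_le (h.sq_sum_le_card univ)

theorem mul_sum_le (hμ : 0 ≤ μ) (v : V) (s : Finset V) :
    μ ^ 3 * (y v * ∑ w ∈ s, y w) ≤ Fintype.card V * G.degree v * #s := by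
  have hsum (t : Finset V) : μ * ∑ w ∈ t, y w ≤ #t * √(Fintype.card V) := by
    rw [mul_sum, ← nsmul_eq_mul]
    exact sum_le_card_nsmul _ _ _ fun w _ => h.mul_le_sqrt_card w
  have hnonneg : 0 ≤ μ * ∑ w ∈ s, y w := mul_nonneg hμ (sum_nonneg fun w _ => h.nonneg w)
  calc μ ^ 3 * (y v * ∑ w ∈ s, y w) = μ * (μ * y v) * (μ * ∑ w ∈ s, y w) := by ring
    _ ≤ μ * (∑ w ∈ G.neighborFinset v, y w) * (μ * ∑ w ∈ s, y w) := by
      gcongr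
      exact h.mul_le v
    _ ≤ (G.degree v * √(Fintype.card V)) * (#s * √(Fintype.card V)) :=
      mul_le_mul (hsum _) (hsum s) hnonneg (by positivity)
    _ = Fintype.card V * G.degree v * #s := by
      rw [mul_mul_mul_comm, Real.mul_self_sqrt (Nat.cast_nonneg _)]
      ring

end IsSubeigenvector

/-! ### The adjacency form -/

/-- The quadratic form `yᵀ A y` of the adjacency matrix `A` of `G`. -/
def adjForm (G : SimpleGraph V) [DecidableRel G.Adj] (y : V → ℝ) : ℝ :=
  ∑ v, y v * ∑ w ∈ G.neighborFinset v, y w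

theorem adjForm_eq_sum_sum_ite (G : SimpleGraph V) [DecidableRel G.Adj] (y : V → ℝ) :
    adjForm G y = ∑ v, ∑ w, if G.Adj v w then y v * y w else 0 := by
  simp only [adjForm, mul_sum, neighborFinset_eq_filter, sum_filter, mul_ite, mul_zero]

theorem IsSubeigenvector.le_adjForm (h : IsSubeigenvector G μ y) : μ ≤ adjForm G y :=
  calc μ = μ * ∑ v, y v ^ 2 := by rw [h.sum_sq, mul_one]
    _ = ∑ v, y v * (μ * y v) := by rw [mul_sum]; exact sum_congr rfl fun v _ => by ring
    _ ≤ adjForm G y := sum_le_sum fun v _ => mul_le_mul_of_nonneg_left (h.mul_le v) (h.nonneg v)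

theorem adjForm_sdiff_add_adjForm {H : SimpleGraph V} [DecidableRel H.Adj] (h : H ≤ G)
    (y : V → ℝ) : adjForm (G \ H) y + adjForm H y = adjForm G y := by
  simp only [adjForm, ← sum_add_distrib, ← mul_add, sum_neighborFinset_sdiff_add h]

theorem adjForm_le_of_degree_le {K : ℝ} (hK : ∀ v, (G.degree v : ℝ) ≤ K) (y : V → ℝ) :
    adjForm G y ≤ K * ∑ v, y v ^ 2 := by
  have hsymm : ∑ v, ∑ w, (if G.Adj v w then y w ^ 2 else 0) =
      ∑ v, ∑ w, if G.Adj v w then y v ^ 2 else 0 := by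
    rw [sum_comm]
    simp only [G.adj_comm]
  calc adjForm G y
      ≤ ∑ v, ∑ w, ((if G.Adj v w then y v ^ 2 else 0) + if G.Adj v w then y w ^ 2 else 0) / 2 := by
        rw [adjForm_eq_sum_sum_ite]
        gcongr with v _ w _
        split_ifs
        · linarith [two_mul_le_add_sq (y v) (y w)]
        · simp
    _ = ∑ v, ∑ w, if G.Adj v w then y v ^ 2 else 0 := by
      simp only [← sum_div, sum_add_distrib, hsymm, add_self_div_two]
    _ = ∑ v, G.degree v * y v ^ 2 := by
      simp only [← sum_filter, ← neighborFinset_eq_filter, sum_const, nsmul_eq_mul,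
        card_neighborFinset_eq_degree]
    _ ≤ K * ∑ v, y v ^ 2 := by
      rw [mul_sum]
      gcongr with v
      exact hK v

theorem adjForm_le_of_isVertexCover (hy : 0 ≤ y) {B : Finset V} (hB : G.IsVertexCover B) :
    adjForm G y ≤ 2 * ∑ v ∈ B, y v * ∑ w ∈ G.neighborFinset v, y w := by
  classical
  have hsum : ∑ v ∈ B, y v * ∑ w ∈ G.neighborFinset v, y w =
      ∑ v, ∑ w, if v ∈ B then if G.Adj v w then y v * y w else 0 else 0 := by
    simp only [mul_sum, neighborFinset_eq_filter, sum_filter, mul_ite, mul_zero, sum_ite_irrel,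
      sum_const_zero, sum_ite_mem, univ_inter]
  have hsymm : ∑ v, ∑ w, (if w ∈ B then if G.Adj v w then y v * y w else 0 else 0) =
      ∑ v, ∑ w, if v ∈ B then if G.Adj v w then y v * y w else 0 else 0 := by
    rw [sum_comm]
    simp only [G.adj_comm, mul_comm]
  rw [hsum, two_mul]
  nth_rw 1 [← hsymm]
  simp only [adjForm_eq_sum_sum_ite, ← sum_add_distrib]
  gcongr with v _ w _
  have := mul_nonneg (hy v) (hy w)
  by_cases hvw : G.Adj v w
  · rcases (by simpa using hB hvw : v ∈ B ∨ w ∈ B) with h | h <;>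
      simp only [h, hvw, if_true] <;> split_ifs <;> linarith
  · simp [hvw]

-- Weighting each edge by `c y v y w ≤ (1 + (c y v y w)²) / 2`.
theorem mul_adjForm_le (c : ℝ) (y : V → ℝ) :
    c * adjForm G y ≤ #G.edgeFinset + c ^ 2 / 2 * adjForm G (fun v => y v ^ 2) := by
  have hE : (#G.edgeFinset : ℝ) = ∑ v, ∑ w, if G.Adj v w then (1 / 2 : ℝ) else 0 := by
    have : (∑ v, G.degree v : ℝ) = 2 * #G.edgeFinset := mod_cast G.sum_degrees_eq_twice_card_edges
    simp only [← sum_filter, ← neighborFinset_eq_filter, sum_const, nsmul_eq_mul,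
      card_neighborFinset_eq_degree, ← sum_mul, this]
    ring
  simp only [hE, adjForm_eq_sum_sum_ite, mul_sum, ← sum_add_distrib]
  gcongr with v _ w _
  split_ifs
  · linarith [sq_nonneg (c * (y v * y w) - 1)]
  · simp

variable [DecidableEq V]

theorem adjForm_cutGraph_le (S : Finset V) (hy : 0 ≤ y) :
    adjForm (cutGraph G S) y ≤ (∑ v, y v) ^ 2 / 2 := by
  have hrow (v : V) : ∑ w ∈ (cutGraph G S).neighborFinset v, y w ≤
      if v ∈ S then ∑ w ∈ Sᶜ, y w else ∑ w ∈ S, y w := by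
    split_ifs with hv <;> refine sum_le_sum_of_subset_of_nonneg (fun w => ?_) fun w _ _ => hy w <;>
      simp only [mem_neighborFinset, cutGraph_adj, mem_compl] <;> tauto
  calc adjForm (cutGraph G S) y
      ≤ ∑ v, y v * if v ∈ S then ∑ w ∈ Sᶜ, y w else ∑ w ∈ S, y w :=
        sum_le_sum fun v _ => mul_le_mul_of_nonneg_left (hrow v) (hy v)
    _ = 2 * ((∑ v ∈ S, y v) * ∑ v ∈ Sᶜ, y v) := by
      simp only [mul_ite, sum_ite, ← sum_mul, filter_mem_eq_inter, univ_inter,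
        filter_notMem_eq_sdiff, ← compl_eq_univ_sdiff]
      ring
    _ ≤ (∑ v, y v) ^ 2 / 2 := by
      rw [← sum_add_sum_compl S]
      linarith [four_mul_le_sq_add (∑ v ∈ S, y v) (∑ v ∈ Sᶜ, y v)]

theorem card_mul_adjForm_cutGraph_le (S : Finset V) (hy : ∑ v, y v ^ 2 = 1) :
    Fintype.card V * adjForm (cutGraph G S) y ≤
      #(cutGraph G S).edgeFinset + (Fintype.card V : ℝ) ^ 2 / 4 := by
  have h1 := mul_adjForm_le (G := cutGraph G S) (Fintype.card V) y
  have h2 := adjForm_cutGraph_le (G := G) S (y := fun v => y v ^ 2) fun v => sq_nonneg _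
  rw [hy] at h2
  nlinarith [sq_nonneg (Fintype.card V : ℝ)]

theorem adjForm_le_of_forall_card_sdiff_le (hy : 0 ≤ y) {B : Finset V} {K : ℕ} {C : ℝ}
    (hK : ∀ v ∉ B, #(G.neighborFinset v \ B) ≤ K)
    (hC : ∀ v ∈ B, y v * ∑ w ∈ G.neighborFinset v, y w ≤ C) :
    adjForm G y ≤ K * ∑ v, y v ^ 2 + 2 * (#B * C) := by
  let H := G.between (B : Set V)ᶜ (B : Set V)ᶜ
  have hHG : H ≤ G := fun _ _ h => h.1
  have hdeg (v : V) : (H.degree v : ℝ) ≤ K := by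
    norm_cast
    rw [← card_neighborFinset_eq_degree]
    by_cases hv : v ∈ B
    · simp [neighborFinset_eq_filter, H, between_adj, hv]
    · convert hK v hv
      ext w
      simp [H, between_adj, hv]
  have hcover : (G \ H).IsVertexCover B := by
    intro v w hvw
    simp only [H, sdiff_adj, between_adj, Set.mem_compl_iff, mem_coe] at hvw ⊢
    tauto
  rw [← adjForm_sdiff_add_adjForm hHG, add_comm]
  refine add_le_add (adjForm_le_of_degree_le hdeg y)
    ((adjForm_le_of_isVertexCover hy hcover).trans ?_)
  gcongr
  rw [← nsmul_eq_mul]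
  refine sum_le_card_nsmul _ _ _ fun v hv => (mul_le_mul_of_nonneg_left ?_ (hy v)).trans (hC v hv)
  rw [← sum_neighborFinset_sdiff_add hHG]
  exact le_add_of_nonneg_right (sum_nonneg fun w _ => hy w)

/-! ### Balanced complete bipartite graphs -/

theorem hasEigenvalue_cutGraph_top {S : Finset V} (hS : S.Nonempty) (hSc : Sᶜ.Nonempty) :
    Module.End.HasEigenvalue (Matrix.toLin' ((cutGraph ⊤ S).adjMatrix ℝ)) √(#S * #Sᶜ) := by
  let x (v : V) : ℝ := if v ∈ S then √(#Sᶜ) else √(#S)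
  have hx (v : V) (hv : v ∈ S) : x v = √(#Sᶜ) := if_pos hv
  have hxc (v : V) (hv : v ∉ S) : x v = √(#S) := if_neg hv
  have hsum : ∑ v ∈ S, x v = #S * √(#Sᶜ) := by
    rw [sum_congr rfl hx, sum_const, nsmul_eq_mul]
  have hsumc : ∑ v ∈ Sᶜ, x v = #Sᶜ * √(#S) := by
    rw [sum_congr rfl fun v hv => hxc v (mem_compl.1 hv), sum_const, nsmul_eq_mul]
  refine Module.End.hasEigenvalue_of_hasEigenvector (x := x) ⟨?_, fun hzero => ?_⟩
  · rw [Module.End.mem_eigenspace_iff]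
    ext v
    rw [Matrix.toLin'_apply, adjMatrix_mulVec_apply, neighborFinset_cutGraph_top, Pi.smul_apply,
      smul_eq_mul, Real.sqrt_mul (Nat.cast_nonneg _)]
    by_cases hv : v ∈ S
    · rw [if_pos hv, hsumc, hx v hv, mul_assoc, Real.mul_self_sqrt (Nat.cast_nonneg _), mul_comm]
    · rw [if_neg hv, hsum, hxc v hv, mul_right_comm, Real.mul_self_sqrt (Nat.cast_nonneg _)]
  · obtain ⟨v, hv⟩ := hS
    have : √(#Sᶜ : ℝ) = 0 := (hx v hv).symm.trans (congrFun hzero v)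
    simp [hSc.card_ne_zero] at this

theorem exists_wheelFree_le_lam1 {k n : ℕ} (hk : 1 ≤ k) (hn : 2 ≤ n) :
    ∃ H : SimpleGraph (Fin n), WheelFree (2 * k + 1) H ∧ (n : ℝ) / 2 - 1 / 2 ≤ lam1 H := by
  obtain ⟨S, -, hS⟩ := exists_subset_card_eq (s := (univ : Finset (Fin n))) (n := n / 2)
    (by simpa using Nat.div_le_self n 2)
  have hsum : #S + #Sᶜ = n := by rw [card_add_card_compl, Fintype.card_fin]
  refine ⟨cutGraph ⊤ S, not_containsCopy_wheelGraph_of_cliqueFree cliqueFree_three_cutGraph hk,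
    (Real.le_sqrt_of_sq_le ?_).trans (le_lam1_of_hasEigenvalue
      (hasEigenvalue_cutGraph_top (S := S) (card_pos.1 (by omega)) (card_pos.1 (by omega))))⟩
  have hle : (#S : ℝ) ≤ #Sᶜ := mod_cast (by omega)
  have hle' : (#Sᶜ : ℝ) ≤ #S + 1 := mod_cast (by omega)
  have hpos : (1 : ℝ) ≤ #S := mod_cast (by omega)
  rw [show (n : ℝ) = #S + #Sᶜ from mod_cast hsum.symm]
  nlinarith

theorem IsSpexWheel.le_lam1 {k n : ℕ} (hk : 1 ≤ k) (hn : 2 ≤ n) {G : SimpleGraph (Fin n)}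
    (hG : IsSpexWheel (2 * k + 1) G) : (n : ℝ) / 2 - 1 / 2 ≤ lam1 G := by
  obtain ⟨H, hH, hlam⟩ := exists_wheelFree_le_lam1 hk hn
  exact hlam.trans (hG.2 H hH)

end

section

variable {V : Type*} [Fintype V] [DecidableEq V] {G : SimpleGraph V} [DecidableRel G.Adj]
  {S : Finset V} {k : ℕ} {μ τ η : ℝ} {y : V → ℝ}

/-! ### Deficient vertices -/

/-- The vertices with more than `τ` non-neighbours on the other side of the cut `(S, Sᶜ)`. -/
noncomputable def deficient (G : SimpleGraph V) [DecidableRel G.Adj] (S : Finset V) (τ : ℝ) :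
    Finset V :=
  {v | τ < (cutGraph Gᶜ S).degree v}

theorem card_deficient_mul_le (G : SimpleGraph V) [DecidableRel G.Adj] (S : Finset V) (τ : ℝ) :
    #(deficient G S τ) * τ ≤ 2 * (#S * #Sᶜ - #(cutGraph G S).edgeFinset) :=
  calc #(deficient G S τ) * τ
      ≤ ∑ v ∈ deficient G S τ, ((cutGraph Gᶜ S).degree v : ℝ) := by
        rw [← nsmul_eq_mul]
        exact card_nsmul_le_sum _ _ _ fun v hv => (mem_filter.1 hv).2.le
    _ ≤ ∑ v, ((cutGraph Gᶜ S).degree v : ℝ) :=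
        sum_le_univ_sum_of_nonneg fun _ => Nat.cast_nonneg _
    _ = 2 * #(cutGraph Gᶜ S).edgeFinset := mod_cast sum_degrees_eq_twice_card_edges _
    _ = 2 * (#S * #Sᶜ - #(cutGraph G S).edgeFinset) := by
        have : (#(cutGraph Gᶜ S).edgeFinset + #(cutGraph G S).edgeFinset : ℝ) = #S * #Sᶜ :=
          mod_cast card_edgeFinset_cutGraph_compl_add
        rw [eq_sub_of_add_eq this]

theorem degree_cutGraph_le_card_sdiff_add {P : Finset V} (hP : Disjoint P (deficient G S τ))
    (v : V) : ((cutGraph G S).degree v : ℝ) ≤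
      #((cutGraph G S).neighborFinset v \ P.biUnion fun p => (cutGraph Gᶜ S).neighborFinset p) +
        #P * τ :=
  calc ((cutGraph G S).degree v : ℝ)
      ≤ #((cutGraph G S).neighborFinset v \ P.biUnion fun p => (cutGraph Gᶜ S).neighborFinset p) +
          #(P.biUnion fun p => (cutGraph Gᶜ S).neighborFinset p) :=
        mod_cast Nat.sub_le_iff_le_add.1 (le_card_sdiff _ _)
    _ ≤ _ + ∑ p ∈ P, ((cutGraph Gᶜ S).degree p : ℝ) := by
        gcongr
        exact_mod_cast card_biUnion_le
    _ ≤ _ + #P * τ := by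
        gcongr
        rw [← nsmul_eq_mul]
        refine sum_le_card_nsmul _ _ _ fun p hp => ?_
        simpa [deficient] using disjoint_left.1 hP hp

theorem card_neighborFinset_sideGraph_sdiff_deficient_lt
    (hG : ¬ ContainsCopy (wheelGraph (2 * k + 1)) G) {v : V}
    (hv : k + k * τ ≤ (cutGraph G S).degree v) :
    #((sideGraph G S).neighborFinset v \ deficient G S τ) < k := by
  by_contra! hk
  obtain ⟨P, hP, hPk⟩ := exists_subset_card_eq hk
  have hPside (p : V) (hp : p ∈ P) : G.Adj v p ∧ (v ∈ S ↔ p ∈ S) := by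
    simpa only [mem_neighborFinset, sideGraph_adj] using (mem_sdiff.1 (hP hp)).1
  have hcommon := degree_cutGraph_le_card_sdiff_add
    (disjoint_of_subset_left hP sdiff_disjoint) v
  rw [hPk] at hcommon
  obtain ⟨Q, hQ, hQk⟩ := exists_subset_card_eq
    (Nat.cast_le.1 (le_of_add_le_add_right (hv.trans hcommon)))
  have hQcut (q : V) (hq : q ∈ Q) : G.Adj v q ∧ (v ∈ S ↔ q ∉ S) := by
    simpa only [mem_neighborFinset, cutGraph_adj] using (mem_sdiff.1 (hQ hq)).1
  refine hG (containsCopy_wheelGraph_of_isCompleteBetween hPk hQk (fun p hp => (hPside p hp).1)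
    (fun q hq => (hQcut q hq).1) fun p hp q hq => ?_)
  have hside := (hPside p hp).2.symm.trans (hQcut q hq).2
  by_contra hpq
  have hmissed : (cutGraph Gᶜ S).Adj p q :=
    cutGraph_adj.2 ⟨⟨fun h => by subst h; tauto, hpq⟩, hside⟩
  exact (mem_sdiff.1 (hQ hq)).2 (mem_biUnion.2 ⟨p, hp, (mem_neighborFinset ..).2 hmissed⟩)

theorem card_mul_card_compl_le (S : Finset V) :
    (#S * #Sᶜ : ℝ) ≤ (Fintype.card V : ℝ) ^ 2 / 4 := by
  have : (#S + #Sᶜ : ℝ) = Fintype.card V := mod_cast card_add_card_compl S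
  rw [← this]
  linarith [four_mul_le_sq_add (#S : ℝ) #Sᶜ]

theorem card_deficient_le [Nonempty V] (hη : 0 < η)
    (hm : (Fintype.card V : ℝ) ^ 2 / 4 - η ^ 2 / 432 * (Fintype.card V : ℝ) ^ 2 ≤
      #(cutGraph G S).edgeFinset) :
    216 * #(deficient G S (η * Fintype.card V)) ≤ η * Fintype.card V := by
  refine le_of_mul_le_mul_right ?_ (by positivity : 0 < η * Fintype.card V)
  linarith [card_deficient_mul_le G S (η * Fintype.card V), card_mul_card_compl_le S]

theorem card_le_eight_mul_degree_cutGraph_top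
    (h : (Fintype.card V : ℝ) ^ 2 / 8 ≤ #S * #Sᶜ) (v : V) :
    (Fintype.card V : ℝ) ≤ 8 * (cutGraph ⊤ S).degree v := by
  have hsum : (#S + #Sᶜ : ℝ) = Fintype.card V := mod_cast card_add_card_compl S
  have hpos : (0 : ℝ) < Fintype.card V := mod_cast Fintype.card_pos_iff.2 ⟨v⟩
  refine le_of_mul_le_mul_left ?_ hpos
  rw [degree_cutGraph_top]
  split_ifs <;> nlinarith [(#S).cast_nonneg (α := ℝ), (#Sᶜ).cast_nonneg (α := ℝ)]

theorem card_neighborFinset_sideGraph_sdiff_deficient_lt_of_notMem (hk : 1 ≤ k)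
    (hG : ¬ ContainsCopy (wheelGraph (2 * k + 1)) G) (hη : 0 ≤ η) (hηk : 864 * k ^ 2 * η ≤ 1)
    (hkn : 216 * k ≤ η * Fintype.card V) (hX : (Fintype.card V : ℝ) ^ 2 / 8 ≤ #S * #Sᶜ) {v : V}
    (hv : v ∉ deficient G S (η * Fintype.card V)) :
    #((sideGraph G S).neighborFinset v \ deficient G S (η * Fintype.card V)) < k := by
  refine card_neighborFinset_sideGraph_sdiff_deficient_lt hG ?_
  have hk' : (1 : ℝ) ≤ k := mod_cast hk
  have hmissed : ((cutGraph Gᶜ S).degree v : ℝ) ≤ η * Fintype.card V := by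
    simpa [deficient] using hv
  have hdeg : ((cutGraph Gᶜ S).degree v + (cutGraph G S).degree v : ℝ) =
      (cutGraph ⊤ S).degree v := mod_cast degree_cutGraph_compl_add_degree_cutGraph v
  have hsmall : 288 * (k * η) ≤ 1 := by nlinarith [mul_nonneg hη (Nat.cast_nonneg k)]
  have hn := mul_le_mul_of_nonneg_right hsmall (Fintype.card V).cast_nonneg
  have hηn : η * Fintype.card V ≤ k * (η * Fintype.card V) :=
    le_mul_of_one_le_left (by positivity) hk'
  linarith [card_le_eight_mul_degree_cutGraph_top hX v]

theorem degree_sideGraph_lt (hG : ¬ ContainsCopy (wheelGraph (2 * k + 1)) G)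
    {v : V} (hv : k + k * τ ≤ (cutGraph G S).degree v) :
    (sideGraph G S).degree v < k + #(deficient G S τ) := by
  have := card_neighborFinset_sideGraph_sdiff_deficient_lt hG hv
  have := card_le_card_sdiff_add_card (s := (sideGraph G S).neighborFinset v)
    (t := deficient G S τ)
  rw [← card_neighborFinset_eq_degree]
  omega

-- Either `v` has few neighbours on its own side, or, by maximality of the cut, few neighbours.
theorem degree_mul_degree_sideGraph_le (hk : 1 ≤ k)
    (hG : ¬ ContainsCopy (wheelGraph (2 * k + 1)) G)
    (hS : ∀ S' : Finset V, #(cutGraph G S').edgeFinset ≤ #(cutGraph G S).edgeFinset)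
    (hη : 0 ≤ η) (hηk : 864 * k ^ 2 * η ≤ 1) (hkn : 216 * k ≤ η * Fintype.card V)
    (hD : 216 * #(deficient G S (η * Fintype.card V)) ≤ η * Fintype.card V) (v : V) :
    (G.degree v * (sideGraph G S).degree v : ℝ) ≤ η * Fintype.card V ^ 2 / 108 := by
  set n := (Fintype.card V : ℝ)
  by_cases hv : k + k * (η * n) ≤ (cutGraph G S).degree v
  · have hside : ((sideGraph G S).degree v : ℝ) < k + #(deficient G S (η * n)) :=
      mod_cast degree_sideGraph_lt hG hv
    have hdeg : (G.degree v : ℝ) ≤ n := Nat.cast_le.2 (G.degree_lt_card_verts v).le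
    calc (G.degree v : ℝ) * (sideGraph G S).degree v ≤ n * (η * n / 108) := by
          gcongr
          linarith
      _ = η * n ^ 2 / 108 := by ring
  · have hk' : (1 : ℝ) ≤ k := mod_cast hk
    have hle : k * (1 : ℝ) ≤ k * (η * n) := by gcongr; linarith
    have hcut : ((cutGraph G S).degree v : ℝ) ≤ 2 * (k * (η * n)) := by linarith
    have hside : ((sideGraph G S).degree v : ℝ) ≤ (cutGraph G S).degree v :=
      mod_cast degree_sideGraph_le_degree_cutGraph hS v
    have hsum : ((sideGraph G S).degree v + (cutGraph G S).degree v : ℝ) = G.degree v :=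
      mod_cast degree_sdiff_add_degree between_le v
    calc (G.degree v : ℝ) * (sideGraph G S).degree v
        ≤ (4 * (k * (η * n))) * (2 * (k * (η * n))) := by
          gcongr
          · linarith only [hside, hsum, hcut]
          · exact hside.trans hcut
      _ = (864 * k ^ 2 * η) * (η * n ^ 2 / 108) := by ring
      _ ≤ η * n ^ 2 / 108 := mul_le_of_le_one_left (by positivity) hηk

theorem IsSubeigenvector.mul_sum_neighborFinset_sideGraph_le (h : IsSubeigenvector G μ y)
    (hμ : (Fintype.card V : ℝ) / 3 ≤ μ) {v : V}
    (hv : (G.degree v * (sideGraph G S).degree v : ℝ) ≤ η * Fintype.card V ^ 2 / 108) :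
    y v * ∑ w ∈ (sideGraph G S).neighborFinset v, y w ≤ η / 4 := by
  set n := (Fintype.card V : ℝ)
  have hn : 0 < n := Nat.cast_pos.2 (Fintype.card_pos_iff.2 ⟨v⟩)
  have hnonneg : 0 ≤ y v * ∑ w ∈ (sideGraph G S).neighborFinset v, y w :=
    mul_nonneg (h.nonneg v) (sum_nonneg fun w _ => h.nonneg w)
  refine le_of_mul_le_mul_left ?_ (by positivity : 0 < (n / 3) ^ 3)
  calc (n / 3) ^ 3 * (y v * ∑ w ∈ (sideGraph G S).neighborFinset v, y w)
      ≤ μ ^ 3 * (y v * ∑ w ∈ (sideGraph G S).neighborFinset v, y w) := by gcongr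
    _ ≤ n * G.degree v * #((sideGraph G S).neighborFinset v) :=
      h.mul_sum_le ((by positivity : 0 ≤ n / 3).trans hμ) v _
    _ = n * (G.degree v * (sideGraph G S).degree v) := by
      rw [card_neighborFinset_eq_degree, mul_assoc]
    _ ≤ n * (η * n ^ 2 / 108) := by gcongr
    _ = (n / 3) ^ 3 * (η / 4) := by ring

theorem IsSubeigenvector.card_mul_le (h : IsSubeigenvector G μ y)
    (hμ : (Fintype.card V : ℝ) / 3 ≤ μ) (hk : 1 ≤ k)
    (hG : ¬ ContainsCopy (wheelGraph (2 * k + 1)) G)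
    (hS : ∀ S' : Finset V, #(cutGraph G S').edgeFinset ≤ #(cutGraph G S).edgeFinset)
    (hη : 0 ≤ η) (hηk : 864 * k ^ 2 * η ≤ 1) (hkn : 216 * k ≤ η * Fintype.card V)
    (hD : 216 * #(deficient G S (η * Fintype.card V)) ≤ η * Fintype.card V)
    (hX : (Fintype.card V : ℝ) ^ 2 / 8 ≤ #S * #Sᶜ) :
    Fintype.card V * μ ≤ #S * #Sᶜ + (Fintype.card V : ℝ) ^ 2 / 4 + (k - 1) * Fintype.card V := by
  set n := (Fintype.card V : ℝ)
  set D := deficient G S (η * n)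
  have hside : adjForm (sideGraph G S) y ≤ (k - 1) + 2 * (#D * (η / 4)) := by
    have := adjForm_le_of_forall_card_sdiff_le (G := sideGraph G S) (B := D) (K := k - 1) h.nonneg
      (fun v hv => Nat.le_sub_one_of_lt <|
        card_neighborFinset_sideGraph_sdiff_deficient_lt_of_notMem hk hG hη hηk hkn hX hv)
      (fun v _ => h.mul_sum_neighborFinset_sideGraph_le hμ
        (degree_mul_degree_sideGraph_le hk hG hS hη hηk hkn hD v))
    rwa [h.sum_sq, mul_one, Nat.cast_sub hk, Nat.cast_one] at this
  have hcut := card_mul_adjForm_cutGraph_le (G := G) S h.sum_sq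
  have hdeficient := card_deficient_mul_le G S (η * n)
  calc n * μ ≤ n * adjForm G y := by gcongr; exact h.le_adjForm
    _ = n * adjForm (sideGraph G S) y + n * adjForm (cutGraph G S) y := by
      rw [← mul_add, adjForm_sdiff_add_adjForm between_le]
    _ ≤ n * ((k - 1) + 2 * (#D * (η / 4))) + (#(cutGraph G S).edgeFinset + n ^ 2 / 4) := by gcongr
    _ ≤ #S * #Sᶜ + n ^ 2 / 4 + (k - 1) * n := by linarith

end

/-! ### Maximum cuts of wheel-free graphs of large spectral radius -/

theorem exists_forall_sq_le_card_edgeFinset_cutGraph (k : ℕ) {ε : ℝ} (hε : 0 < ε) :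
    ∃ C : ℝ, ∀ {n : ℕ} {G : SimpleGraph (Fin n)} [DecidableRel G.Adj] {S : Finset (Fin n)} {μ : ℝ}
      {y : Fin n → ℝ}, ¬ ContainsCopy (wheelGraph (2 * k + 1)) G →
      (∀ S', #(cutGraph G S').edgeFinset ≤ #(cutGraph G S).edgeFinset) → 0 ≤ μ →
      IsSubeigenvector G μ y → μ ^ 2 ≤ #(cutGraph G S).edgeFinset + C + ε * n ^ 2 := by
  obtain ⟨C, hC⟩ := exists_forall_extremalNumber_completeEquipartiteGraph_two_le k (half_pos hε)
  refine ⟨2 * C, fun {n G _ S μ y} hG hS hμ h => ?_⟩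
  obtain ⟨u, hu⟩ := h.exists_sq_le_sum_degree hμ
  have hdeg : (G.degree u : ℝ) ≤ n := mod_cast (G.degree_lt_card_verts u).le.trans_eq (by simp)
  have hcut : (#(cutGraph G (G.neighborFinset u)).edgeFinset : ℝ) ≤ #(cutGraph G S).edgeFinset :=
    mod_cast hS _
  have hnbr : (#(G.induce (G.neighborFinset u : Set (Fin n))).edgeFinset : ℝ) ≤
      C + ε / 2 * n ^ 2 :=
    calc (#(G.induce (G.neighborFinset u : Set (Fin n))).edgeFinset : ℝ)
        ≤ extremalNumber (G.degree u) (completeEquipartiteGraph 2 k) :=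
          mod_cast card_edgeFinset_induce_neighborFinset_le hG u
      _ ≤ C + ε / 2 * G.degree u ^ 2 := hC _
      _ ≤ C + ε / 2 * n ^ 2 := by gcongr
  have hsum : (∑ v ∈ G.neighborFinset u, (G.degree v : ℝ)) =
      #(cutGraph G (G.neighborFinset u)).edgeFinset +
        2 * #(G.induce (G.neighborFinset u : Set (Fin n))).edgeFinset :=
    mod_cast sum_degree_eq_card_edgeFinset_cutGraph_add _
  linarith

theorem eventually_le_mul_natCast (a : ℝ) {b : ℝ} (hb : 0 < b) :
    ∀ᶠ n : ℕ in Filter.atTop, a ≤ b * n :=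
  (tendsto_natCast_atTop_atTop.const_mul_atTop hb).eventually_ge_atTop a

theorem eventually_le_card_edgeFinset_cutGraph (k : ℕ) (c : ℝ) {ε : ℝ} (hε : 0 < ε) :
    ∀ᶠ n : ℕ in Filter.atTop, ∀ {G : SimpleGraph (Fin n)} [DecidableRel G.Adj]
      {S : Finset (Fin n)} {μ : ℝ} {y : Fin n → ℝ}, ¬ ContainsCopy (wheelGraph (2 * k + 1)) G →
      (∀ S', #(cutGraph G S').edgeFinset ≤ #(cutGraph G S).edgeFinset) → (n : ℝ) / 2 - c ≤ μ →
      IsSubeigenvector G μ y → (n : ℝ) ^ 2 / 4 - ε * n ^ 2 ≤ #(cutGraph G S).edgeFinset := by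
  have hε3 : 0 < ε / 3 := by positivity
  obtain ⟨C, hC⟩ := exists_forall_sq_le_card_edgeFinset_cutGraph k hε3
  filter_upwards [eventually_le_mul_natCast c hε3, eventually_le_mul_natCast C hε3,
    eventually_le_mul_natCast c one_half_pos, Filter.eventually_ge_atTop 1]
    with n hcε hCε hc hn G _ S μ y hG hS hμ h
  have hn' : (1 : ℝ) ≤ n := mod_cast hn
  have hbase : 0 ≤ (n : ℝ) / 2 - c := by linarith
  have hsq : (n : ℝ) ^ 2 / 4 - c * n ≤ μ ^ 2 :=
    calc (n : ℝ) ^ 2 / 4 - c * n ≤ (n / 2 - c) ^ 2 := by linarith [sq_nonneg c]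
      _ ≤ μ ^ 2 := by gcongr
  have hcn : c * n ≤ ε / 3 * n ^ 2 := by
    rw [sq, ← mul_assoc]
    gcongr
  have hCn : C ≤ ε / 3 * n ^ 2 := hCε.trans (by gcongr; exact le_self_pow₀ hn' two_ne_zero)
  linarith [hC hG hS (hbase.trans hμ) h]

theorem eventually_sq_half_sub_card_le {k : ℕ} (hk : 1 ≤ k) (c : ℝ) :
    ∀ᶠ n : ℕ in Filter.atTop, ∀ G : SimpleGraph (Fin n), WheelFree (2 * k + 1) G →
      (n : ℝ) / 2 - c ≤ lam1 G → ∀ S : Finset (Fin n), (∀ S', cutCount G S' ≤ cutCount G S) →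
        ((n : ℝ) / 2 - #S) ^ 2 ≤ (k - 1 + c) * n := by
  classical
  set η : ℝ := 1 / (864 * k ^ 2) with hη_def
  have hη : 0 < η := by positivity
  have hηk : 864 * k ^ 2 * η = 1 := mul_one_div_cancel (by positivity)
  have hη1 : η ≤ 1 := by
    rw [hη_def, div_le_one₀ (by positivity)]
    have : (1 : ℝ) ≤ k := mod_cast hk
    nlinarith
  filter_upwards [eventually_le_mul_natCast (216 * k) hη,
    eventually_le_mul_natCast (6 * c) one_pos, Filter.eventually_gt_atTop 0,
    eventually_le_card_edgeFinset_cutGraph k c (show 0 < η ^ 2 / 432 by positivity)]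
    with n hkn hcn hn hcut G hG hlam S hS
  have : NeZero n := ⟨hn.ne'⟩
  have hμ : (n : ℝ) / 3 ≤ lam1 G := by linarith
  have hlam_pos : 0 < lam1 G := hμ.trans_lt' (by positivity)
  obtain ⟨y, hy⟩ := exists_isSubeigenvector_of_hasEigenvalue (hasEigenvalue_lam1 hlam_pos)
  rw [abs_of_pos hlam_pos] at hy
  simp only [cutCount_eq_card_edgeFinset] at hS
  have hm := hcut hG hS hlam hy
  have hcompl := card_edgeFinset_cutGraph_compl_add (G := G) (S := S)
  have hX : (n : ℝ) ^ 2 / 8 ≤ #S * #Sᶜ := by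
    have : (#(cutGraph G S).edgeFinset : ℝ) ≤ #S * #Sᶜ := mod_cast (by omega)
    have hη2 : η ^ 2 * (n : ℝ) ^ 2 ≤ 1 * (n : ℝ) ^ 2 := by
      gcongr
      exact pow_le_one₀ hη.le hη1
    linarith
  have hcard := Fintype.card_fin n
  have hbound := hy.card_mul_le (by rwa [hcard]) hk hG hS hη.le hηk.le (by rwa [hcard])
    (card_deficient_le hη (by rwa [hcard])) (by rwa [hcard])
  have hsum : (#S + #Sᶜ : ℝ) = n := mod_cast (card_add_card_compl S).trans hcard
  rw [hcard, eq_sub_of_add_eq' hsum] at hbound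
  nlinarith

end

theorem part_sizes_sqrt_general (k : ℕ) (hk : 1 ≤ k) :
    ∃ N : ℕ, ∀ n : ℕ, N ≤ n → ∀ G : SimpleGraph (Fin n), WheelFree (2 * k + 1) G →
      (n : ℝ) / 2 - k / 2 - 1 ≤ lam1 G → ∀ S T : Finset (Fin n), IsMaxCut G S T →
        (n : ℝ) / 2 - Real.sqrt (3 * (n : ℝ) * (k : ℝ) / 2) ≤ (S.card : ℝ) ∧
        (S.card : ℝ) ≤ (n : ℝ) / 2 + Real.sqrt (3 * (n : ℝ) * (k : ℝ) / 2) ∧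
        (n : ℝ) / 2 - Real.sqrt (3 * (n : ℝ) * (k : ℝ) / 2) ≤ (T.card : ℝ) ∧
        (T.card : ℝ) ≤ (n : ℝ) / 2 + Real.sqrt (3 * (n : ℝ) * (k : ℝ) / 2) := by
  obtain ⟨N, hN⟩ := Filter.eventually_atTop.1 (eventually_sq_half_sub_card_le hk (k / 2 + 1))
  refine ⟨N, fun n hn G hG hlam S T ⟨hT, hS⟩ => ?_⟩
  have hsq : ((n : ℝ) / 2 - S.card) ^ 2 ≤ 3 * n * k / 2 :=
    (hN n hn G hG (by linarith) S hS).trans_eq (by ring)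
  have hcard : (S.card + T.card : ℝ) = n := by
    subst hT
    exact_mod_cast S.card_add_card_compl.trans (Fintype.card_fin n)
  have habs := abs_le.1 (Real.abs_le_sqrt hsq)
  refine ⟨?_, ?_, ?_, ?_⟩ <;> linarith

/-- The two sides of a maximum cut have size `n/2 ± √(3nk/2)`. -/
theorem part_sizes_sqrt (k : ℕ) (hk : 2 ≤ k) :
    ∃ N : ℕ, ∀ n : ℕ, N ≤ n → ∀ G : SimpleGraph (Fin n), IsSpexWheel (2 * k + 1) G →
      ∀ S T : Finset (Fin n), IsMaxCut G S T →
        (n : ℝ) / 2 - Real.sqrt (3 * (n : ℝ) * (k : ℝ) / 2) ≤ (S.card : ℝ) ∧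
        (S.card : ℝ) ≤ (n : ℝ) / 2 + Real.sqrt (3 * (n : ℝ) * (k : ℝ) / 2) ∧
        (n : ℝ) / 2 - Real.sqrt (3 * (n : ℝ) * (k : ℝ) / 2) ≤ (T.card : ℝ) ∧
        (T.card : ℝ) ≤ (n : ℝ) / 2 + Real.sqrt (3 * (n : ℝ) * (k : ℝ) / 2) := by
  obtain ⟨N, hN⟩ := part_sizes_sqrt_general k (by omega)
  exact ⟨max N 2, fun n hn G hG => hN n (le_of_max_le_left hn) G hG.1 (by
    linarith [hG.le_lam1 (by omega) (le_of_max_le_right hn), k.cast_nonneg (α := ℝ)])⟩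
end
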